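/- Let 𝔞 = ⟨f̃₁, …, f̃_k⟩ be an ideal of height k in the polynomial ring R = Q̄[X₁, …, X_n], and f₁, …, f_m ∈ R with ht(⟨f₁, …, f_m⟩) > k. Then for any l = |Ass(𝔞)|·(m − 1) + 1, the set {Σᵢ jⁱ fᵢ : j = 1, …, l} is not contained in the union of the associated primes of 𝔞; in particular some Vandermonde combination Σᵢ jⁱ fᵢ is a non-zero-divisor modulo 𝔞. -/

import Mathlib

open Finset

/-- The height of an ideal: the infimum of the heights of the primes containing it. -/
noncomputable def idealHeight {R : Type*} [CommRing R] (I : Ideal R) : ℕ∞ :=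
  ⨅ (p : PrimeSpectrum R) (_ : I ≤ p.asIdeal), Order.height p


/-- `x` is regular modulo `J`. -/
def RegMod {R : Type*} [CommRing R] (J : Ideal R) (x : R) : Prop := ∀ r, x * r ∈ J → r ∈ J

/-- `RS I J k A`: there is a chain of `k` elements of `I`, regular starting from `J`, ending at `A`. -/
inductive RS {R : Type*} [CommRing R] (I : Ideal R) (J : Ideal R) : ℕ → Ideal R → Prop
  | nil : RS I J 0 J
  | snoc {k : ℕ} {A : Ideal R} {x : R} (h : RS I J k A) (hx : x ∈ I) (hr : RegMod A x) :
      RS I J (k + 1) (A ⊔ Ideal.span {x})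

section
variable {R : Type*} [CommRing R]

theorem mem_sup_span {A : Ideal R} {x y : R} :
    y ∈ A ⊔ Ideal.span {x} ↔ ∃ a ∈ A, ∃ c, y = a + x * c := by
  constructor
  · intro h
    obtain ⟨a, ha, b, hb, rfl⟩ := Submodule.mem_sup.1 h
    obtain ⟨c, rfl⟩ := Ideal.mem_span_singleton'.1 hb
    exact ⟨a, ha, c, by ring⟩
  · rintro ⟨a, ha, c, rfl⟩
    exact Submodule.add_mem_sup ha (Ideal.mem_span_singleton.2 (dvd_mul_right _ _))

theorem RS.mono {I I' J A : Ideal R} {k : ℕ} (h : RS I J k A) (hI : I ≤ I') : RS I' J k A := by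
  induction h with
  | nil => exact .nil
  | snoc _ hx hr ih => exact .snoc ih (hI hx) hr

theorem RS.trans {I J A B : Ideal R} {k l : ℕ} (h : RS I J k A) (h' : RS I A l B) :
    RS I J (k + l) B := by
  induction h' with
  | nil => exact h
  | snoc _ hx hr ih => exact .snoc ih hx hr

theorem RS.prefix {I J B : Ideal R} {k l : ℕ} (h : RS I J l B) (hk : k < l) :
    ∃ A x, RS I J k A ∧ x ∈ I ∧ RegMod A x := by
  induction h with
  | nil => omega
  | @snoc l A x h hx hr ih =>
    rcases Nat.lt_succ_iff_lt_or_eq.1 hk with h' | rfl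
    · exact ih h'
    · exact ⟨A, x, h, hx, hr⟩

theorem RS.comap {S : Type*} [CommRing S] (φ : S →+* R) (hφ : Function.Surjective φ)
    {I J A : Ideal R} {k : ℕ} (h : RS I J k A) :
    RS (I.comap φ) (J.comap φ) k (A.comap φ) := by
  induction h with
  | nil => exact .nil
  | @snoc k A x h hx hr ih =>
    obtain ⟨x, rfl⟩ := hφ x
    have : (A ⊔ Ideal.span {φ x}).comap φ = A.comap φ ⊔ Ideal.span {x} := by
      ext y
      rw [Ideal.mem_comap, mem_sup_span, mem_sup_span]
      constructor
      · rintro ⟨a, ha, c, hc⟩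
        obtain ⟨c, rfl⟩ := hφ c
        refine ⟨y - x * c, ?_, c, by ring⟩
        rw [Ideal.mem_comap]
        have : φ (y - x * c) = a := by rw [map_sub, map_mul, hc]; ring
        rwa [this]
      · rintro ⟨a, ha, c, rfl⟩
        exact ⟨φ a, ha, φ c, by simp⟩
    rw [this]
    refine .snoc ih hx fun r hr' => hr _ ?_
    simpa [Ideal.mem_comap] using hr'

theorem one_step {I A : Ideal R} {x y : R} (hx : RegMod A x) (hy : RegMod A y) (hyI : y ∈ I)
    (h : ∃ u, u ∉ A ⊔ Ideal.span {x} ∧ ∀ i ∈ I, i * u ∈ A ⊔ Ideal.span {x}) :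
    ∃ v, v ∉ A ⊔ Ideal.span {y} ∧ ∀ i ∈ I, i * v ∈ A ⊔ Ideal.span {y} := by
  obtain ⟨u, hu, h⟩ := h
  obtain ⟨a, ha, v, hv⟩ := mem_sup_span.1 (h y hyI)
  refine ⟨v, fun hv' => hu ?_, fun i hi => ?_⟩
  · obtain ⟨a', ha', c, rfl⟩ := mem_sup_span.1 hv'
    refine mem_sup_span.2 ⟨u - x * c, hy _ ?_, c, by ring⟩
    have : y * (u - x * c) = a + x * a' := by linear_combination hv
    rw [this]
    exact A.add_mem ha (A.mul_mem_left _ ha')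
  · obtain ⟨a', ha', w, hw⟩ := mem_sup_span.1 (h i hi)
    refine mem_sup_span.2 ⟨i * v - y * w, hx _ ?_, w, by ring⟩
    have : x * (i * v - y * w) = y * a' - i * a := by linear_combination y * hw - i * hv
    rw [this]
    exact A.sub_mem (A.mul_mem_left _ ha') (A.mul_mem_left _ ha)

theorem RS.swap {I J A : Ideal R} {k : ℕ} (h : RS I J k A) :
    ∃ T : Finset (Ideal R), (∀ Q ∈ T, ∃ x ∈ I, RegMod Q x) ∧
      ∀ z, (∀ Q ∈ T, RegMod Q z) → RegMod A z →
        RegMod J z ∧ RS I (J ⊔ Ideal.span {z}) k (A ⊔ Ideal.span {z}) := by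
  classical
  induction h with
  | nil => exact ⟨∅, by simp, fun z _ hz => ⟨hz, .nil⟩⟩
  | @snoc k A x h hx hr ih =>
    obtain ⟨T, hT, ih⟩ := ih
    refine ⟨insert A T, ?_, fun z hz hzA => ?_⟩
    · intro Q hQ
      rcases Finset.mem_insert.1 hQ with rfl | hQ
      · exact ⟨x, hx, hr⟩
      · exact hT Q hQ
    · obtain ⟨h1, h2⟩ := ih z (fun Q hQ => hz Q (Finset.mem_insert_of_mem hQ))
        (hz A (Finset.mem_insert_self _ _))
      refine ⟨h1, ?_⟩
      rw [sup_right_comm]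
      refine .snoc h2 hx fun r hr' => ?_
      obtain ⟨a, ha, w, hw⟩ := mem_sup_span.1 hr'
      have hw' : w ∈ A ⊔ Ideal.span {x} :=
        hzA w (mem_sup_span.2 ⟨-a, A.neg_mem ha, r, by linear_combination -hw⟩)
      obtain ⟨a', ha', c, rfl⟩ := mem_sup_span.1 hw'
      refine mem_sup_span.2 ⟨r - z * c, hr _ ?_, c, by ring⟩
      have : x * (r - z * c) = a + z * a' := by linear_combination hw
      rw [this]
      exact A.add_mem ha (A.mul_mem_left _ ha')

theorem regMod_iff [IsNoetherianRing R] {J : Ideal R} {x : R} :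
    RegMod J x ↔ ∀ P ∈ associatedPrimes R (R ⧸ J), x ∉ P := by
  have h := biUnion_associatedPrimes_eq_zero_divisors R (R ⧸ J)
  have h2 : x ∈ (⋃ p ∈ associatedPrimes R (R ⧸ J), (p : Set R)) ↔ ¬ RegMod J x := by
    rw [h]
    simp only [RegMod, Set.mem_ofPred_eq]
    push Not
    constructor
    · rintro ⟨y, hy, hxy⟩
      obtain ⟨y, rfl⟩ := Ideal.Quotient.mk_surjective y
      refine ⟨y, ?_, fun hy' => hy (Ideal.Quotient.eq_zero_iff_mem.2 hy')⟩
      rw [← Ideal.Quotient.eq_zero_iff_mem]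
      exact hxy
    · rintro ⟨y, hxy, hy⟩
      refine ⟨Ideal.Quotient.mk J y, fun hy' => hy (Ideal.Quotient.eq_zero_iff_mem.1 hy'), ?_⟩
      exact Ideal.Quotient.eq_zero_iff_mem.2 hxy
  rw [← not_iff_not, ← h2]
  simp

theorem ass_iff [IsNoetherianRing R] {J P : Ideal R} (h : P ∈ associatedPrimes R (R ⧸ J)) :
    ∃ u, u ∉ J ∧ ∀ i, i ∈ P ↔ i * u ∈ J := by
  rw [AssociatedPrimes.mem_iff, isAssociatedPrime_iff] at h
  obtain ⟨hP, y, rfl⟩ := h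
  obtain ⟨y, rfl⟩ := Ideal.Quotient.mk_surjective y
  have key : ∀ i, i ∈ Submodule.colon (⊥ : Submodule R (R ⧸ J)) {Ideal.Quotient.mk J y} ↔
      i * y ∈ J := by
    intro i
    rw [Submodule.mem_colon_singleton, Submodule.mem_bot, ← Ideal.Quotient.eq_zero_iff_mem]
    rfl
  refine ⟨y, fun hy => ?_, key⟩
  exact hP.ne_top ((Ideal.eq_top_iff_one _).2 ((key 1).2 (by simpa using hy)))

theorem avoid [IsNoetherianRing R] {I : Ideal R} (T : Finset (Ideal R))
    (hT : ∀ Q ∈ T, ∃ x ∈ I, RegMod Q x) : ∃ z ∈ I, ∀ Q ∈ T, RegMod Q z := by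
  have hfin : (⋃ Q ∈ T, associatedPrimes R (R ⧸ Q)).Finite :=
    T.finite_toSet.biUnion fun Q _ => associatedPrimes.finite R (R ⧸ Q)
  by_contra! hcon
  have hsub : (I : Set R) ⊆ ⋃ P ∈ (⋃ Q ∈ T, associatedPrimes R (R ⧸ Q)), ((id P : Ideal R) : Set R) := by
    intro z hz
    obtain ⟨Q, hQ, hz'⟩ := hcon z hz
    rw [regMod_iff] at hz'
    push Not at hz'
    obtain ⟨P, hP, hzP⟩ := hz'
    exact Set.mem_biUnion (Set.mem_biUnion hQ hP) hzP
  rw [Ideal.subset_union_prime_finite hfin ⊤ ⊤] at hsub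
  · obtain ⟨P, hP, hIP⟩ := hsub
    simp only [Set.mem_iUnion] at hP
    obtain ⟨Q, hQ, hP⟩ := hP
    obtain ⟨x, hx, hxr⟩ := hT Q hQ
    exact regMod_iff.1 hxr P hP (hIP hx)
  · intro P hP _ _
    simp only [Set.mem_iUnion] at hP
    obtain ⟨Q, hQ, hP⟩ := hP
    exact hP.isPrime

theorem exchange [IsNoetherianRing R] {I : Ideal R} (k : ℕ) : ∀ {J A B : Ideal R},
    RS I J k A → RS I J k B → (∃ u, u ∉ A ∧ ∀ i ∈ I, i * u ∈ A) →
    ∃ v, v ∉ B ∧ ∀ i ∈ I, i * v ∈ B := by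
  classical
  induction k with
  | zero =>
    intro J A B hA hB h
    cases hA; cases hB; exact h
  | succ k ih =>
    intro J A B hA hB h
    cases hA with | @snoc _ A a hA ha har =>
    cases hB with | @snoc _ B b hB hb hbr =>
    obtain ⟨T, hT, hA'⟩ := hA.swap
    obtain ⟨T', hT', hB'⟩ := hB.swap
    obtain ⟨z, hz, hzr⟩ := avoid (I := I) (insert A (insert B (T ∪ T'))) (by
      intro Q hQ
      simp only [Finset.mem_insert, Finset.mem_union] at hQ
      rcases hQ with rfl | rfl | hQ | hQ
      exacts [⟨a, ha, har⟩, ⟨b, hb, hbr⟩, hT _ hQ, hT' _ hQ])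
    have hzA : RegMod A z := hzr _ (by simp)
    have hzB : RegMod B z := hzr _ (by simp)
    have h1 := hA' z (fun Q hQ => hzr _ (by simp [hQ])) hzA
    have h2 := hB' z (fun Q hQ => hzr _ (by simp [hQ])) hzB
    exact one_step hzB hbr hb (ih h1.2 h2.2 (one_step har hzA hz h))

theorem exchange_le [IsNoetherianRing R] {I J A B : Ideal R} {k l : ℕ}
    (hA : RS I J k A) (hB : RS I J l B) (h : ∃ u, u ∉ A ∧ ∀ i ∈ I, i * u ∈ A) : l ≤ k := by
  by_contra! hlt
  obtain ⟨B', x, hB', hx, hxr⟩ := hB.prefix hlt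
  obtain ⟨v, hv, hv'⟩ := exchange k hA hB' h
  exact hv (hxr v (hv' x hx))

/-! ### polynomial rings -/

theorem RS.polyC {I J A : Ideal R} {k : ℕ} (h : RS I J k A) :
    RS (I.map Polynomial.C) (J.map Polynomial.C) k (A.map (Polynomial.C : R →+* _)) := by
  induction h with
  | nil => exact .nil
  | @snoc k A x h hx hr ih =>
    rw [Ideal.map_sup, Ideal.map_span, Set.image_singleton]
    refine .snoc ih (Ideal.mem_map_of_mem _ hx) fun r hr' => ?_
    rw [Ideal.mem_map_C_iff] at hr' ⊢
    intro n
    exact hr _ (by simpa using hr' n)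

theorem regMod_monic {A : Ideal R} {F : Polynomial R} (hF : F.Monic) :
    RegMod (A.map (Polynomial.C : R →+* _)) F := by
  intro r hr
  have h0 : ∀ p : Polynomial R, p ∈ A.map (Polynomial.C : R →+* _) ↔
      p.map (Ideal.Quotient.mk A) = 0 := by
    intro p
    rw [Ideal.mem_map_C_iff, Polynomial.ext_iff]
    simp [Ideal.Quotient.eq_zero_iff_mem]
  rw [h0] at hr ⊢
  rw [Polynomial.map_mul] at hr
  exact ((hF.map (Ideal.Quotient.mk A)).mul_right_eq_zero_iff).1 hr

theorem RS.monic (n : ℕ) : ∀ (F : Fin n → Polynomial R), (∀ i, (F i).Monic) →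
    RS (Ideal.span (Set.range fun i => Polynomial.aeval (MvPolynomial.X (R := R) i) (F i)))
      ⊥ n (Ideal.span (Set.range fun i => Polynomial.aeval (MvPolynomial.X (R := R) i) (F i))) := by
  induction n with
  | zero =>
    intro F hF
    have : Ideal.span (Set.range fun i : Fin 0 =>
      Polynomial.aeval (MvPolynomial.X (R := R) i) (F i)) = ⊥ := by simp
    rw [this]
    exact .nil
  | succ n ih =>
    intro F hF
    have h := (ih (fun i => F i.succ) (fun i => hF _)).polyC
    let F0 : Polynomial (MvPolynomial (Fin n) R) := (F 0).map MvPolynomial.C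
    have h' := (RS.snoc (x := F0) (h.mono le_sup_left)
      (Ideal.mem_sup_right (Ideal.mem_span_singleton_self F0))
      (regMod_monic ((hF 0).map _))).comap (MvPolynomial.finSuccEquiv R n).toRingEquiv.toRingHom
        (MvPolynomial.finSuccEquiv R n).surjective
    have e1 : Ideal.comap (MvPolynomial.finSuccEquiv R n).toRingEquiv.toRingHom
        (Ideal.map Polynomial.C (⊥ : Ideal (MvPolynomial (Fin n) R))) = ⊥ := by
      rw [Ideal.map_bot]
      exact (RingHom.injective_iff_ker_eq_bot _).1 (MvPolynomial.finSuccEquiv R n).injective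
    have e2 : Ideal.comap (MvPolynomial.finSuccEquiv R n).toRingEquiv.toRingHom
        (Ideal.map Polynomial.C (Ideal.span (Set.range fun i : Fin n =>
          Polynomial.aeval (MvPolynomial.X (R := R) i) (F i.succ))) ⊔ Ideal.span {F0}) =
        Ideal.span (Set.range fun i => Polynomial.aeval (MvPolynomial.X (R := R) i) (F i)) := by
      have : Ideal.map Polynomial.C (Ideal.span (Set.range fun i : Fin n =>
          Polynomial.aeval (MvPolynomial.X (R := R) i) (F i.succ))) ⊔ Ideal.span {F0} =
          Ideal.map (MvPolynomial.finSuccEquiv R n).toRingEquiv.toRingHom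
          (Ideal.span (Set.range fun i => Polynomial.aeval (MvPolynomial.X (R := R) i) (F i))) := by
        rw [Ideal.map_span, Ideal.map_span, ← Ideal.span_union, ← Set.range_comp, ← Set.range_comp]
        congr 1
        ext p
        simp only [Set.union_singleton, Set.mem_insert_iff, Set.mem_range, Fin.exists_fin_succ]
        have key : ∀ j, (MvPolynomial.finSuccEquiv R n) (Polynomial.aeval (MvPolynomial.X (R := R) j) (F j)) =
          Polynomial.aeval (MvPolynomial.finSuccEquiv R n (MvPolynomial.X (R := R) j)) (F j) := by
          intro j
          rw [← Polynomial.aeval_algHom_apply]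
        have k0 : (MvPolynomial.finSuccEquiv R n) (Polynomial.aeval (MvPolynomial.X (R := R) 0) (F 0)) = F0 := by
          rw [key, MvPolynomial.finSuccEquiv_X_zero]
          have := Polynomial.aeval_map_algebraMap (MvPolynomial (Fin n) R)
            (Polynomial.X : Polynomial (MvPolynomial (Fin n) R)) (F 0)
          rw [Polynomial.aeval_X_left_apply] at this
          exact this.symm
        have ks : ∀ i : Fin n, (MvPolynomial.finSuccEquiv R n)
            (Polynomial.aeval (MvPolynomial.X (R := R) i.succ) (F i.succ)) =
            Polynomial.C (Polynomial.aeval (MvPolynomial.X (R := R) i) (F i.succ)) := by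
          intro i
          rw [key, MvPolynomial.finSuccEquiv_X_succ, Polynomial.aeval_def, Polynomial.aeval_def,
            Polynomial.hom_eval₂]
          rfl
        refine or_congr ⟨fun h => k0.trans h.symm, fun h => h.symm.trans k0⟩
          (exists_congr fun i => ?_)
        exact ⟨fun h => (ks i).trans h, fun h => (ks i).symm.trans h⟩
      rw [this]
      exact Ideal.comap_map_of_bijective _ (MvPolynomial.finSuccEquiv R n).bijective
    rw [e1, e2] at h'
    exact h'

end

theorem ht_add_le {K : Type*} [Field K] {n s : ℕ} (P : PrimeSpectrum (MvPolynomial (Fin n) K))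
    (g : MvPolynomial (Fin s) K →+* (MvPolynomial (Fin n) K ⧸ P.asIdeal))
    (hinj : Function.Injective g) (hint : g.IsIntegral) :
    Order.height P + (s : ℕ∞) ≤ (n : ℕ∞) := by
  have hs : ((s : ℕ) : WithBot ℕ∞) ≤ Order.krullDim (PrimeSpectrum (MvPolynomial (Fin s) K)) := by
    have := MvPolynomial.ringKrullDim_of_isNoetherianRing (R := K) (ι := Fin s)
    rw [ringKrullDim_eq_zero_of_field, zero_add, Nat.card_fin] at this
    exact this.ge
  obtain ⟨l, hl⟩ := Order.le_krullDim_iff.1 hs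
  algebraize [g]
  obtain ⟨Q, hQ, hQl⟩ := Ideal.exists_ideal_over_prime_of_isIntegral_of_isDomain
    (S := MvPolynomial (Fin n) K ⧸ P.asIdeal) (RelSeries.head l).asIdeal
    (((RingHom.injective_iff_ker_eq_bot g).1 hinj).trans_le bot_le)
  have : Q.LiesOver (RelSeries.head l).asIdeal := ⟨hQl.symm⟩
  have := Algebra.HasGoingUp.of_isIntegral (R := MvPolynomial (Fin s) K)
    (S := MvPolynomial (Fin n) K ⧸ P.asIdeal)
  obtain ⟨L, hL, -, -⟩ := Ideal.exists_ltSeries_of_hasGoingUp l Q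
  let φ : PrimeSpectrum (MvPolynomial (Fin n) K ⧸ P.asIdeal) → PrimeSpectrum (MvPolynomial (Fin n) K) :=
    PrimeSpectrum.comap (Ideal.Quotient.mk P.asIdeal)
  have hφ : StrictMono φ := by
    refine Monotone.strictMono_of_injective (fun _ _ hab ↦ Ideal.comap_mono hab) ?_
    exact PrimeSpectrum.comap_injective_of_surjective _ Ideal.Quotient.mk_surjective
  have hco : (s : ℕ∞) ≤ Order.coheight P := by
    rw [← hl, ← hL]
    have : P ≤ (L.map φ hφ).head := by
      show P.asIdeal ≤ Ideal.comap _ _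
      intro x hx
      rw [Ideal.mem_comap, Ideal.Quotient.eq_zero_iff_mem.2 hx]
      exact Ideal.zero_mem _
    exact Order.length_le_coheight this
  have hdim := Order.krullDim_eq_iSup_height_add_coheight_of_nonempty
    (α := PrimeSpectrum (MvPolynomial (Fin n) K))
  have h2 := MvPolynomial.ringKrullDim_of_isNoetherianRing (R := K) (ι := Fin n)
  rw [ringKrullDim_eq_zero_of_field, zero_add, Nat.card_fin, ringKrullDim, hdim] at h2
  have h3 : (⨆ a : PrimeSpectrum (MvPolynomial (Fin n) K), Order.height a + Order.coheight a) = (n : ℕ∞) := by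
    exact_mod_cast h2
  rw [← h3]
  exact (add_le_add_right hco _).trans (le_iSup (fun a : PrimeSpectrum (MvPolynomial (Fin n) K) => Order.height a + Order.coheight a) P)

theorem ker_aeval_eq {R : Type*} [CommRing R] {s : ℕ} (y : Fin s → R) :
    RingHom.ker (MvPolynomial.aeval (R := R) y) =
      Ideal.span (Set.range fun i => Polynomial.aeval (MvPolynomial.X (R := R) i)
        (Polynomial.X - Polynomial.C (y i))) := by
  apply le_antisymm
  · intro p hp
    have key : ∀ p : MvPolynomial (Fin s) R, p - MvPolynomial.C (MvPolynomial.aeval y p) ∈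
        Ideal.span (Set.range fun i => Polynomial.aeval (MvPolynomial.X (R := R) i)
        (Polynomial.X - Polynomial.C (y i))) := by
      intro p
      induction p using MvPolynomial.induction_on with
      | C a => simp
      | add p q hp hq =>
        have := Ideal.add_mem _ hp hq
        convert this using 1
        simp only [map_add]; ring
      | mul_X p i hp =>
        have h1 : Polynomial.aeval (MvPolynomial.X (R := R) i)
          (Polynomial.X - Polynomial.C (y i)) ∈ Ideal.span (Set.range fun i => Polynomial.aeval (MvPolynomial.X (R := R) i)
        (Polynomial.X - Polynomial.C (y i))) := Ideal.subset_span ⟨i, rfl⟩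
        have := Ideal.add_mem _ (Ideal.mul_mem_left _ (MvPolynomial.X i) hp)
          (Ideal.mul_mem_left _ (MvPolynomial.C (MvPolynomial.aeval y p)) h1)
        convert this using 1
        simp [MvPolynomial.algebraMap_eq]; ring
    have := key p
    rw [RingHom.mem_ker] at hp
    rw [hp] at this
    simpa using this
  · rw [Ideal.span_le]
    rintro _ ⟨i, rfl⟩
    simp [RingHom.mem_ker]

theorem unmixed {K : Type*} [Field K] {n k : ℕ} {A : Ideal (MvPolynomial (Fin n) K)}
    (P : PrimeSpectrum (MvPolynomial (Fin n) K))
    (hP : P.asIdeal ∈ associatedPrimes _ (MvPolynomial (Fin n) K ⧸ A))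
    (hA : RS P.asIdeal ⊥ k A) : Order.height P ≤ (k : ℕ∞) := by
  obtain ⟨s, hsn, g, hinj, hint⟩ := exists_integral_inj_algHom_of_quotient P.asIdeal P.isPrime.ne_top
  have hdim := ht_add_le P g.toRingHom hinj hint
  have hy : ∀ i : Fin s, ∃ y, Ideal.Quotient.mk P.asIdeal y = g (MvPolynomial.X i) :=
    fun i => Ideal.Quotient.mk_surjective _
  choose y hy using hy
  have hF : ∀ j : Fin n, ∃ F : Polynomial (MvPolynomial (Fin s) K), F.Monic ∧
      F.eval₂ g.toRingHom (Ideal.Quotient.mk P.asIdeal (MvPolynomial.X j)) = 0 :=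
    fun j => hint _
  choose F hFm hF using hF
  let φ : MvPolynomial (Fin s) (MvPolynomial (Fin n) K) →+* MvPolynomial (Fin n) K :=
    (MvPolynomial.aeval (R := MvPolynomial (Fin n) K) y).toRingHom
  have hφ : Function.Surjective φ := fun p => ⟨MvPolynomial.C p, by simp [φ]⟩
  let P' := P.asIdeal.comap φ
  have h1 : RS P' ⊥ s (RingHom.ker φ) := by
    have := RS.monic s (fun i => Polynomial.X - Polynomial.C (y i))
      (fun i => Polynomial.monic_X_sub_C _)
    rw [← ker_aeval_eq y] at this
    refine this.mono ?_
    exact Ideal.comap_mono bot_le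
  have h2 := h1.trans (hA.comap φ hφ)
  let e := MvPolynomial.commAlgEquiv K (Fin s) (Fin n)
  have h3 : RS (P'.comap e.symm.toRingEquiv.toRingHom) ⊥ n _ := (RS.monic n F hFm).mono (by
    rw [Ideal.span_le]
    rintro _ ⟨j, rfl⟩
    let ψ : MvPolynomial (Fin n) (MvPolynomial (Fin s) K) →+* _ :=
      (Ideal.Quotient.mk P.asIdeal).comp (φ.comp e.symm.toRingEquiv.toRingHom)
    have hX : ∀ j, ψ (MvPolynomial.X j) = Ideal.Quotient.mk P.asIdeal (MvPolynomial.X j) := by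
      intro j
      have : e.symm (MvPolynomial.X j) = MvPolynomial.C (MvPolynomial.X j) := by
        rw [AlgEquiv.symm_apply_eq]; exact (MvPolynomial.commAlgEquiv_C_X j).symm
      show Ideal.Quotient.mk P.asIdeal (φ (e.symm (MvPolynomial.X j))) = _
      rw [this]
      simp [φ]
    have hC : ψ.comp MvPolynomial.C = g.toRingHom := by
      apply MvPolynomial.ringHom_ext
      · intro a
        have : e.symm (MvPolynomial.C (MvPolynomial.C a)) = MvPolynomial.C (MvPolynomial.C a) := by
          rw [AlgEquiv.symm_apply_eq, MvPolynomial.commAlgEquiv_C, MvPolynomial.map_C]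
        show Ideal.Quotient.mk P.asIdeal (φ (e.symm (MvPolynomial.C (MvPolynomial.C a)))) =
          g (algebraMap K _ a)
        rw [this, AlgHom.commutes]
        simp [φ]
        rfl
      · intro i
        have : e.symm (MvPolynomial.C (MvPolynomial.X i)) = MvPolynomial.X i := by
          rw [AlgEquiv.symm_apply_eq]; exact (MvPolynomial.commAlgEquiv_X i).symm
        show Ideal.Quotient.mk P.asIdeal (φ (e.symm (MvPolynomial.C (MvPolynomial.X i)))) =
          g (MvPolynomial.X i)
        rw [this, ← hy]
        simp [φ]
    have h0 : ψ (Polynomial.aeval (MvPolynomial.X j) (F j)) = 0 := by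
      rw [Polynomial.aeval_def, Polynomial.hom_eval₂, hX, MvPolynomial.algebraMap_eq, hC, hF]
    have h0' := (Ideal.Quotient.eq_zero_iff_mem (I := P.asIdeal)).1 h0
    exact h0')
  have h4 := h3.comap e.toRingEquiv.toRingHom e.surjective
  have e1 : Ideal.comap e.toRingEquiv.toRingHom
      (Ideal.comap e.symm.toRingEquiv.toRingHom P') = P' := by
    ext x
    simp [Ideal.mem_comap]
  have e2 : Ideal.comap e.toRingEquiv.toRingHom ⊥ = ⊥ :=
    (RingHom.injective_iff_ker_eq_bot _).1 e.injective
  rw [e1, e2] at h4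
  obtain ⟨u, hu, huP⟩ := ass_iff hP
  have hle := exchange_le h2 h4 ⟨MvPolynomial.C u, by simpa [Ideal.mem_comap, φ] using hu,
    fun i hi => by
      have := (huP (φ i)).1 hi
      rw [Ideal.mem_comap, map_mul]
      simpa [φ] using this⟩
  have : Order.height P + (s : ℕ∞) ≤ (k : ℕ∞) + s := by
    refine hdim.trans ?_
    rw [add_comm] at hle
    exact_mod_cast hle
  exact (ENat.add_le_add_iff_right (ENat.natCast_ne_top s)).1 this

theorem vand {R : Type*} [CommRing R] [Algebra ℚ R] {m : ℕ} (c : Fin m → R) (Q : Ideal R)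
    [Q.IsPrime] (hc : ∃ i, c i ∉ Q) (T : Finset ℕ)
    (hT : ∀ t ∈ T, ∑ i : Fin m, (t : R) ^ (i : ℕ) * c i ∈ Q) : T.card ≤ m - 1 := by
  classical
  let π := Ideal.Quotient.mk Q
  have : CharZero (R ⧸ Q) := algebraRat.charZero _
  let p : Polynomial (R ⧸ Q) := ∑ i : Fin m, Polynomial.monomial (i : ℕ) (π (c i))
  have hcoeff : ∀ i : Fin m, p.coeff i = π (c i) := by
    intro i
    simp only [p, Polynomial.finsetSum_coeff, Polynomial.coeff_monomial]
    rw [Finset.sum_eq_single i]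
    · simp
    · intro j _ hj
      rw [if_neg]
      exact fun h => hj (Fin.ext h)
    · simp
  have hp : p ≠ 0 := by
    rintro h0
    obtain ⟨i, hi⟩ := hc
    apply hi
    rw [← Ideal.Quotient.eq_zero_iff_mem]
    have := hcoeff i
    rw [h0] at this
    simpa using this.symm
  have hdeg : p.natDegree ≤ m - 1 := by
    refine Polynomial.natDegree_sum_le_of_forall_le _ _ fun i _ => ?_
    exact (Polynomial.natDegree_monomial_le _).trans (by omega)
  have hsub : T.image (Nat.cast : ℕ → R ⧸ Q) ⊆ p.roots.toFinset := by
    intro x hx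
    obtain ⟨t, ht, rfl⟩ := Finset.mem_image.1 hx
    rw [Multiset.mem_toFinset, Polynomial.mem_roots hp, Polynomial.IsRoot.def]
    have := Ideal.Quotient.eq_zero_iff_mem.2 (hT t ht)
    rw [← this]
    simp [p, Polynomial.eval_finsetSum, π, mul_comm]
  calc T.card = (T.image (Nat.cast : ℕ → R ⧸ Q)).card :=
        (Finset.card_image_of_injective _ Nat.cast_injective).symm
    _ ≤ p.roots.toFinset.card := Finset.card_le_card hsub
    _ ≤ p.roots.card := Multiset.toFinset_card_le _
    _ ≤ p.natDegree := p.card_roots'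
    _ ≤ m - 1 := hdeg

theorem vand_avoid {R : Type*} [CommRing R] [Algebra ℚ R] {m : ℕ} (c : Fin m → R)
    (S : Set (Ideal R)) (hS : S.Finite) (hprime : ∀ Q ∈ S, Q.IsPrime)
    (hc : ∀ Q ∈ S, ∃ i, c i ∉ Q) :
    ∃ t ∈ Finset.Icc 1 (Nat.card S * (m - 1) + 1), ∀ Q ∈ S,
      ∑ i : Fin m, (t : R) ^ (i : ℕ) * c i ∉ Q := by
  classical
  let T := Finset.Icc 1 (Nat.card S * (m - 1) + 1)
  let bad : Ideal R → Finset ℕ := fun Q => T.filter fun t => ∑ i : Fin m, (t : R) ^ (i : ℕ) * c i ∈ Q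
  have hcard : (hS.toFinset.biUnion bad).card ≤ hS.toFinset.card * (m - 1) := by
    refine Finset.card_biUnion_le_card_mul _ _ _ fun Q hQ => ?_
    have hQ := hS.mem_toFinset.1 hQ
    have := hprime Q hQ
    exact vand c Q (hc Q hQ) _ fun t ht => (Finset.mem_filter.1 ht).2
  have hN : Nat.card S = hS.toFinset.card := Nat.card_eq_card_finite_toFinset hS
  obtain ⟨t, ht, ht'⟩ := Finset.exists_mem_notMem_of_card_lt_card (s := hS.toFinset.biUnion bad)
    (t := T) (by simp only [T, Nat.card_Icc]; rw [hN]; omega)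
  refine ⟨t, ht, fun Q hQ hmem => ht' ?_⟩
  exact Finset.mem_biUnion.2 ⟨Q, hS.mem_toFinset.2 hQ, Finset.mem_filter.2 ⟨ht, hmem⟩⟩

theorem exists_notMem {R : Type*} [CommRing R] {m : ℕ} {k : ℕ∞} (c : Fin m → R)
    (J Q : Ideal R) (hQ : Q.IsPrime) (hJ : J ≤ Q)
    (hQk : Order.height (⟨Q, hQ⟩ : PrimeSpectrum R) < k)
    (hc : k ≤ idealHeight (J ⊔ Ideal.span (Set.range c))) : ∃ i, c i ∉ Q := by
  by_contra! h
  have hle : J ⊔ Ideal.span (Set.range c) ≤ Q := by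
    refine sup_le hJ (Ideal.span_le.2 ?_)
    rintro _ ⟨i, rfl⟩
    exact h i
  have : idealHeight (J ⊔ Ideal.span (Set.range c)) ≤ Order.height (⟨Q, hQ⟩ : PrimeSpectrum R) :=
    iInf₂_le (⟨Q, hQ⟩ : PrimeSpectrum R) hle
  exact absurd (hc.trans this) (not_le.2 hQk)

theorem ass_le {R : Type*} [CommRing R] [IsNoetherianRing R] {J P : Ideal R}
    (h : P ∈ associatedPrimes R (R ⧸ J)) : J ≤ P := by
  obtain ⟨u, -, hu⟩ := ass_iff h
  exact fun x hx => (hu x).2 (J.mul_mem_right _ hx)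

theorem RS.le {R : Type*} [CommRing R] {I J A : Ideal R} {k : ℕ} (h : RS I J k A) (hJ : J ≤ I) :
    A ≤ I := by
  induction h with
  | nil => exact hJ
  | snoc _ hx _ ih => exact sup_le ih ((Ideal.span_singleton_le_iff_mem _).2 hx)

theorem RS.self {R : Type*} [CommRing R] {I J A : Ideal R} {k : ℕ} (h : RS I J k A) :
    RS A J k A := by
  induction h with
  | nil => exact .nil
  | snoc _ hx hr ih =>
    exact .snoc (ih.mono le_sup_left) (Ideal.mem_sup_right (Ideal.mem_span_singleton_self _)) hr

theorem exists_RS {K : Type*} [Field K] [CharZero K] {n k : ℕ}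
    (g : Fin k → MvPolynomial (Fin n) K) (hg : (k : ℕ∞) ≤ idealHeight (Ideal.span (Set.range g))) :
    RS ⊤ ⊥ k (Ideal.span (Set.range g)) := by
  have key : ∀ r i, i + r = k → ∃ (J : Ideal (MvPolynomial (Fin n) K))
      (c : Fin r → MvPolynomial (Fin n) K), RS ⊤ ⊥ i J ∧
      J ⊔ Ideal.span (Set.range c) = Ideal.span (Set.range g) := by
    intro r i
    induction i generalizing r with
    | zero =>
      intro h
      obtain rfl : r = k := by omega
      exact ⟨⊥, g, .nil, by simp⟩
    | succ i ih =>
      intro h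
      obtain ⟨J, c, hJ, hc⟩ := ih (r + 1) (by omega)
      obtain ⟨t, -, ht⟩ := vand_avoid c (associatedPrimes _ (MvPolynomial (Fin n) K ⧸ J))
        (associatedPrimes.finite _ _) (fun Q hQ => hQ.isPrime) (by
          intro Q hQ
          refine exists_notMem (k := k) c J Q hQ.isPrime (ass_le hQ) ?_ (by rw [hc]; exact hg)
          refine (unmixed (k := i) ⟨Q, hQ.isPrime⟩ hQ (hJ.self.mono (ass_le hQ))).trans_lt ?_
          exact_mod_cast (by omega : i < k))
      refine ⟨_, fun j => c j.succ, .snoc hJ trivial (regMod_iff.2 ht), ?_⟩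
      rw [← hc]
      rw [Fin.sum_univ_succ]
      simp only [Fin.val_zero, pow_zero, one_mul]
      have hin : ∀ I : Ideal (MvPolynomial (Fin n) K), (∀ j : Fin r, c j.succ ∈ I) →
          ∑ j : Fin r, (t : MvPolynomial (Fin n) K) ^ (j.succ : ℕ) * c j.succ ∈ I :=
        fun I hI => I.sum_mem fun j _ => I.mul_mem_left _ (hI j)
      apply le_antisymm
      · refine sup_le (sup_le le_sup_left ?_) (Ideal.span_le.2 ?_)
        · rw [Ideal.span_singleton_le_iff_mem]
          refine Ideal.mem_sup_right (Ideal.add_mem _ (Ideal.subset_span ⟨0, rfl⟩) (hin _ ?_))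
          exact fun j => Ideal.subset_span ⟨j.succ, rfl⟩
        · rintro _ ⟨j, rfl⟩
          exact Ideal.mem_sup_right (Ideal.subset_span ⟨j.succ, rfl⟩)
      · refine sup_le (le_sup_left.trans le_sup_left) (Ideal.span_le.2 ?_)
        have hs : ∀ j : Fin r, c j.succ ∈ (J ⊔ Ideal.span {c 0 + ∑ j : Fin r,
            (t : MvPolynomial (Fin n) K) ^ (j.succ : ℕ) * c j.succ}) ⊔
            Ideal.span (Set.range fun j : Fin r => c j.succ) :=
          fun j => Ideal.mem_sup_right (Ideal.subset_span ⟨j, rfl⟩)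
        rintro _ ⟨j, rfl⟩
        refine Fin.cases ?_ hs j
        refine (Ideal.add_mem_iff_left _ (hin _ hs)).1 ?_
        exact Ideal.mem_sup_left (Ideal.mem_sup_right (Ideal.mem_span_singleton_self _))
  obtain ⟨J, c, hJ, hc⟩ := key 0 k (by omega)
  rw [← hc]
  simpa using hJ

/-- Let `𝔞 = ⟨f̃₁, …, f̃_k⟩` be an ideal of height `k` in
`R = ℚ̄[X₁, …, X_n]`, and `f₁, …, f_m ∈ R` with `ht⟨f₁, …, f_m⟩ > k`.  Then for
`l = |Ass(𝔞)|·(m − 1) + 1`, some Vandermonde combination `Σᵢ jⁱ fᵢ` with `1 ≤ j ≤ l` avoids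
every associated prime of `𝔞`; in particular it is a non-zero-divisor modulo `𝔞`. -/
theorem stmt19 (n m k : ℕ)
    (g : Fin k → MvPolynomial (Fin n) (AlgebraicClosure ℚ))
    (f : Fin m → MvPolynomial (Fin n) (AlgebraicClosure ℚ))
    (h𝔞 : idealHeight (Ideal.span (Set.range g)) = (k : ℕ∞))
    (hf : (k : ℕ∞) < idealHeight (Ideal.span (Set.range f))) :
    ∃ j ∈ Finset.Icc 1
        (Nat.card (associatedPrimes (MvPolynomial (Fin n) (AlgebraicClosure ℚ))
          (MvPolynomial (Fin n) (AlgebraicClosure ℚ) ⧸ Ideal.span (Set.range g))) * (m - 1) + 1),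
      (∀ P ∈ associatedPrimes (MvPolynomial (Fin n) (AlgebraicClosure ℚ))
          (MvPolynomial (Fin n) (AlgebraicClosure ℚ) ⧸ Ideal.span (Set.range g)),
        (∑ i : Fin m, (j : MvPolynomial (Fin n) (AlgebraicClosure ℚ)) ^ ((i : ℕ) + 1) * f i) ∉ P)
      ∧
      (∀ r : MvPolynomial (Fin n) (AlgebraicClosure ℚ),
        (∑ i : Fin m, (j : MvPolynomial (Fin n) (AlgebraicClosure ℚ)) ^ ((i : ℕ) + 1) * f i) * r
          ∈ Ideal.span (Set.range g) → r ∈ Ideal.span (Set.range g)) := by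
  classical
  have hRS := exists_RS g h𝔞.ge
  have hht : ∀ (Q) (hQ : Q ∈ associatedPrimes (MvPolynomial (Fin n) (AlgebraicClosure ℚ))
      (MvPolynomial (Fin n) (AlgebraicClosure ℚ) ⧸ Ideal.span (Set.range g))),
      Order.height (⟨Q, hQ.isPrime⟩ : PrimeSpectrum _) ≤ (k : ℕ∞) :=
    fun Q hQ => unmixed ⟨Q, hQ.isPrime⟩ hQ (hRS.self.mono (ass_le hQ))
  obtain ⟨t, ht, hav⟩ := vand_avoid f _ (associatedPrimes.finite _
      (MvPolynomial (Fin n) (AlgebraicClosure ℚ) ⧸ Ideal.span (Set.range g)))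
    (fun Q hQ => hQ.isPrime) (by
      intro Q hQ
      refine exists_notMem (k := idealHeight (Ideal.span (Set.range f))) f ⊥ Q hQ.isPrime bot_le
        ((hht Q hQ).trans_lt hf) (by rw [bot_sup_eq]))
  have hmain : ∀ P ∈ associatedPrimes (MvPolynomial (Fin n) (AlgebraicClosure ℚ))
      (MvPolynomial (Fin n) (AlgebraicClosure ℚ) ⧸ Ideal.span (Set.range g)),
      (∑ i : Fin m, (t : MvPolynomial (Fin n) (AlgebraicClosure ℚ)) ^ ((i : ℕ) + 1) * f i) ∉ P := by
    intro P hP hmem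
    have hprime := hP.isPrime
    have heq : (∑ i : Fin m, (t : MvPolynomial (Fin n) (AlgebraicClosure ℚ)) ^ ((i : ℕ) + 1) * f i) =
        (t : MvPolynomial (Fin n) (AlgebraicClosure ℚ)) *
          ∑ i : Fin m, (t : MvPolynomial (Fin n) (AlgebraicClosure ℚ)) ^ (i : ℕ) * f i := by
      rw [Finset.mul_sum]
      exact Finset.sum_congr rfl fun i _ => by ring
    rw [heq] at hmem
    rcases hprime.mem_or_mem hmem with h | h
    · have hu : IsUnit (t : MvPolynomial (Fin n) (AlgebraicClosure ℚ)) := by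
        have h1 : (t : AlgebraicClosure ℚ) ≠ 0 := by
          have := (Finset.mem_Icc.1 ht).1
          exact_mod_cast (by omega : t ≠ 0)
        have := (isUnit_iff_ne_zero.2 h1).map
          (MvPolynomial.C : AlgebraicClosure ℚ →+* MvPolynomial (Fin n) (AlgebraicClosure ℚ))
        simpa using this
      exact hprime.ne_top (Ideal.eq_top_of_isUnit_mem _ h hu)
    · exact hav P hP h
  exact ⟨t, ht, hmain, regMod_iff.2 hmain⟩
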